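/- Define BST insertion by `insert k nil = node nil k nil` and `insert k (node l a r) = if k < a then node (insert k l) a r else node l a (insert k r)`, and define the attachment parent by `parent k (node l a r) = if k < a then (if l = nil then a else parent k l) else (if r = nil then a else parent k r)`. Let t be a nonempty binary search tree and k a key not occurring in t. Then in the in-order traversal of `insert k t`, the key k and the key `parent k t` occupy adjacent positions. -/

import Mathlib

/-- Binary trees over a type `α`. -/
inductive BTree (α : Type*) where
  | nil : BTree α
  | node (l : BTree α) (a : α) (r : BTree α) : BTree α
  deriving DecidableEq

namespace BTree

variable {α : Type*}

/-- In-order traversal. -/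
def inorder : BTree α → List α
  | nil => []
  | node l a r => inorder l ++ [a] ++ inorder r

/-- Key membership in a tree. -/
def Mem : BTree α → α → Prop
  | nil, _ => False
  | node l a r, x => Mem l x ∨ x = a ∨ Mem r x

/-- `IsSubtree s t` means `s` occurs as a subtree of `t`. -/
inductive IsSubtree : BTree α → BTree α → Prop
  | refl (t : BTree α) : IsSubtree t t
  | left {s l r : BTree α} {a : α} : IsSubtree s l → IsSubtree s (node l a r)
  | right {s l r : BTree α} {a : α} : IsSubtree s r → IsSubtree s (node l a r)

/-- `x` and `y` occupy adjacent positions in the list `L` (`x` immediately before `y`). -/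
def Adjacent (L : List α) (x y : α) : Prop :=
  ∃ i : ℕ, L[i]? = some x ∧ L[i + 1]? = some y

variable [LinearOrder α]

/-- The binary-search-tree property: at every node, all keys of the left subtree are
smaller than the root key and all keys of the right subtree are larger. -/
def IsBST : BTree α → Prop
  | nil => True
  | node l a r => (∀ x, Mem l x → x < a) ∧ (∀ x, Mem r x → a < x) ∧ IsBST l ∧ IsBST r

/-- `Ancestor t x y`: the key `x` is an ancestor of the key `y` in `t`, i.e. `y` occurs
in a proper subtree of the subtree of `t` rooted at `x`. -/
def Ancestor (t : BTree α) (x y : α) : Prop :=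
  ∃ l r : BTree α, IsSubtree (node l x r) t ∧ (Mem l y ∨ Mem r y)

/-- Depth (number of edges from the root) of a key in a binary search tree,
computed by the standard search path. -/
def depth : BTree α → α → ℕ
  | nil, _ => 0
  | node l a r, x => if x = a then 0 else if x < a then depth l x + 1 else depth r x + 1

/-- Standard BST insertion. -/
def insert (k : α) : BTree α → BTree α
  | nil => node nil k nil
  | node l a r => if k < a then node (insert k l) a r else node l a (insert k r)

/-- The key of the node to which a fresh key `k` gets attached. -/
def parent? (k : α) : BTree α → Option α
  | nil => none
  | node l a r =>
      if k < a then (if l = nil then some a else parent? k l)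
      else (if r = nil then some a else parent? k r)

theorem Adjacent.append_right {β : Type*} {L : List β} {x y : β} (h : Adjacent L x y) (M : List β) :
    Adjacent (L ++ M) x y := by
  obtain ⟨i, hx, hy⟩ := h
  obtain ⟨hi, -⟩ := List.getElem?_eq_some_iff.mp hx
  obtain ⟨hj, -⟩ := List.getElem?_eq_some_iff.mp hy
  exact ⟨i, by rwa [List.getElem?_append_left hi], by rwa [List.getElem?_append_left hj]⟩

theorem Adjacent.append_left {β : Type*} {L : List β} {x y : β} (h : Adjacent L x y) (M : List β) :
    Adjacent (M ++ L) x y := by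
  obtain ⟨i, hx, hy⟩ := h
  refine ⟨M.length + i, ?_, ?_⟩
  · rwa [List.getElem?_append_right (by lia), Nat.add_sub_cancel_left]
  · rwa [Nat.add_assoc, List.getElem?_append_right (by lia), Nat.add_sub_cancel_left]

theorem adjacent_cons_cons {β : Type*} (x y : β) (L : List β) : Adjacent (x :: y :: L) x y :=
  ⟨0, rfl, rfl⟩

/-- Adjacency of a freshly inserted key and its attachment parent needs no ordering hypothesis
on the tree. -/
theorem exists_parent_adjacent (k : α) (t : BTree α) (hne : t ≠ nil) :
    ∃ p : α, parent? k t = some p ∧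
      (Adjacent (inorder (insert k t)) k p ∨ Adjacent (inorder (insert k t)) p k) := by
  induction t with
  | nil => exact absurd rfl hne
  | node l a r ihl ihr =>
    by_cases hka : k < a
    · by_cases hl : l = nil
      · subst hl
        refine ⟨a, by simp [parent?, hka], Or.inl ?_⟩
        simpa [insert, inorder, hka] using adjacent_cons_cons k a (inorder r)
      · obtain ⟨p, hp, h⟩ := ihl hl
        refine ⟨p, by simpa [parent?, hka, hl] using hp, ?_⟩
        simp only [insert, hka, if_true, inorder]
        exact h.imp (fun h => (h.append_right _).append_right _)
          (fun h => (h.append_right _).append_right _)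
    · by_cases hr : r = nil
      · subst hr
        refine ⟨a, by simp [parent?, hka], Or.inr ?_⟩
        simpa [insert, inorder, hka] using (adjacent_cons_cons a k []).append_left (inorder l)
      · obtain ⟨p, hp, h⟩ := ihr hr
        refine ⟨p, by simpa [parent?, hka, hr] using hp, ?_⟩
        simp only [insert, hka, if_false, inorder]
        exact h.imp (fun h => h.append_left _) (fun h => h.append_left _)

/-- inserting a fresh key `k` into a nonempty BST puts `k` immediately to
the left or to the right of its attachment parent in the in-order traversal. -/
theorem insert_adjacent_parent (t : BTree α) (ht : IsBST t) (hne : t ≠ nil)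
    (k : α) (hk : ¬ Mem t k) :
    ∃ p : α, parent? k t = some p ∧
      (Adjacent (inorder (insert k t)) k p ∨ Adjacent (inorder (insert k t)) p k) :=
  exists_parent_adjacent k t hne

end BTree
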